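/- Let G be a finite simple bipartite graph with bipartition classes U of size n+k and V of size n, with edge weights in a commutative ring, let 2 ≤ k ≤ n, and let a_1, b_1, …, a_k, b_k be distinct vertices with A = {a_1,…,a_k} ⊆ U and B = {b_1,…,b_k} ⊆ U, such that G is noncrossing with respect to the cyclic sequence (a_1, b_1, a_2, b_2, …, a_k, b_k). Then for every partition of A into two disjoint subsets A_1, A_2: M(G−A)·M(G−B) = Σ_{Y⊆B, |Y| = k−|A_1|} M(G−A_1−Y)·M(G−A_2−(B∖Y)). -/

import Mathlib

/-- A perfect matching of the induced subgraph of `G` on the vertex set `s`,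
represented as a set `m` of edges of `G`: every edge of `m` is an edge of `G`
with both endpoints in `s`, and every vertex of `s` lies in exactly one edge of `m`. -/
def IsPMOn {α : Type*} (G : SimpleGraph α) (s : Finset α) (m : Finset (Sym2 α)) : Prop :=
  (∀ e ∈ m, e ∈ G.edgeSet ∧ ∀ v ∈ e, v ∈ s) ∧ ∀ v ∈ s, ∃! e, e ∈ m ∧ v ∈ e

/-- The number of perfect matchings of the induced subgraph of `G` on `s`. -/
noncomputable def pmCount {α : Type*} (G : SimpleGraph α) (s : Finset α) : ℕ :=
  Nat.card {m : Finset (Sym2 α) // IsPMOn G s m}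

open Classical in
/-- The sum, over all perfect matchings of the induced subgraph of `G` on `s`,
of the product of the weights of the edges of the matching. -/
noncomputable def pmSum {α R : Type*} [Fintype α] [DecidableEq α] [CommRing R]
    (G : SimpleGraph α) (w : Sym2 α → R) (s : Finset α) : R :=
  ∑ m ∈ Finset.univ.filter (fun m : Finset (Sym2 α) => IsPMOn G s m), ∏ e ∈ m, w e

/-- There are two vertex-disjoint paths in `G`, one joining `x₁` to `y₁` and one joining
`x₂` to `y₂`, whose internal vertices avoid `S`. -/
def DisjointPaths {α : Type*} (G : SimpleGraph α) (S : Set α) (x₁ y₁ x₂ y₂ : α) : Prop :=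
  ∃ (p : G.Walk x₁ y₁) (q : G.Walk x₂ y₂), p.IsPath ∧ q.IsPath ∧
    (∀ u ∈ p.support, u ∉ q.support) ∧
    (∀ u ∈ p.support, u ≠ x₁ → u ≠ y₁ → u ∉ S) ∧
    (∀ u ∈ q.support, u ≠ x₂ → u ≠ y₂ → u ∉ S)

/-- `G` is noncrossing with respect to the cyclic sequence given by the list `L`:
there are no indices `i < j < k < l` such that `G` contains two vertex-disjoint paths,
one joining `L[i]` to `L[k]` and one joining `L[j]` to `L[l]`, whose internal vertices
avoid the vertices of `L`. -/
def NoncrossingList {α : Type*} (G : SimpleGraph α) (L : List α) : Prop :=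
  ∀ i j k l : Fin L.length, i < j → j < k → k < l →
    ¬ DisjointPaths G {x | x ∈ L} (L.get i) (L.get k) (L.get j) (L.get l)

/-- `U, W` form a bipartition of the vertices of `G`. -/
def IsBipartition {α : Type*} [Fintype α] [DecidableEq α]
    (G : SimpleGraph α) (U W : Finset α) : Prop :=
  Disjoint U W ∧ U ∪ W = Finset.univ ∧
    ∀ ⦃x y⦄, G.Adj x y → ((x ∈ U ∧ y ∈ W) ∨ (x ∈ W ∧ y ∈ U))

/-- `P` is an `MH`-alternating path, where `MH` is the unique perfect matching of the
induced subgraph of `G` on the vertex set `sH`: `P` is a (nontrivial) path, among any two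
consecutive edges of `P` exactly one lies in `MH`, and for each endpoint the incident edge
of `P` lies in `MH` iff the endpoint belongs to `sH`. -/
def IsAltPath {α : Type*} (G : SimpleGraph α) (sH : Finset α) (MH : Finset (Sym2 α))
    {x y : α} (P : G.Walk x y) : Prop :=
  P.IsPath ∧ P.edges ≠ [] ∧
  P.edges.Chain' (fun e f => e ∈ MH ↔ f ∉ MH) ∧
  (∀ e ∈ P.edges.head?, (e ∈ MH ↔ x ∈ sH)) ∧
  (∀ e ∈ P.edges.getLast?, (e ∈ MH ↔ y ∈ sH))

/-- A family of pairwise vertex-disjoint `MH`-alternating paths in `G` whose set of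
path-endpoints is exactly `A`, each vertex of `A` being an endpoint of exactly one
path of the family. -/
def IsAltPathNest {α : Type*} (G : SimpleGraph α) (sH : Finset α) (MH : Finset (Sym2 α))
    (A : Finset α) (F : Finset (Σ x : α, Σ y : α, G.Walk x y)) : Prop :=
  (∀ p ∈ F, IsAltPath G sH MH p.2.2) ∧
  (∀ p ∈ F, ∀ q ∈ F, p ≠ q → ∀ u ∈ p.2.2.support, u ∉ q.2.2.support) ∧
  (∀ p ∈ F, p.1 ∈ A ∧ p.2.1 ∈ A) ∧
  (∀ v ∈ A, ∃! p, p ∈ F ∧ (v = p.1 ∨ v = p.2.1))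

/-- A 1-factor on `{1, …, n}`: a partition of `Fin n` into pairs, each pair recorded
as an ordered pair `(i, j)` with `i < j`. -/
def IsOneFactor (n : ℕ) (F : Finset (Fin n × Fin n)) : Prop :=
  (∀ p ∈ F, p.1 < p.2) ∧ ∀ v : Fin n, ∃! p, p ∈ F ∧ (v = p.1 ∨ v = p.2)

/-- The crossing number of a 1-factor: the number of pairs of pairs
`(i,j), (k,l)` in `F` with `i < k < j < l`. -/
def crossingNumber (n : ℕ) (F : Finset (Fin n × Fin n)) : ℕ :=
  ((F ×ˢ F).filter (fun q => q.1.1 < q.2.1 ∧ q.2.1 < q.1.2 ∧ q.1.2 < q.2.2)).card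

/-!
Superpose a perfect matching of `G - S` with one of `G - T`, where `S, T ⊆ U`. A connected
component `K` of the superposition has at most `2 |K ∩ V|` edges, so being connected it satisfies
`|K ∩ U| ≤ |K ∩ V| + 1`; on the other hand both `|S ∩ K|` and `|T ∩ K|` equal
`|K ∩ U| - |K ∩ V|`. Hence each component contains either no deleted vertex or exactly one of `S`
and one of `T`: reachability in the superposition pairs `S` with `T`.

Given matchings of `G - A` and `G - B`, exchange them on all components meeting `A₂`. This moves
`A₂` from the first deleted set to the second, and the set `Y` of partners of `A₂` the other way.
Exchanging again undoes this, provided that in every superposition arising on the right-hand side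
the components still pair `A` with `B`. This is where noncrossing enters: disjoint components
give disjoint paths, so the pairing of the positions of `a₁, b₁, …, a_k, b_k` is a noncrossing
fixed-point-free involution. The positions strictly between two partners are permuted among
themselves, so their number is even and partners have opposite parity.
-/

open Finset

section Pairing

/-- `r` restricts to the graph of a bijection between `S` and `T`. -/
def IsPairing {α β : Type*} (r : α → β → Prop) (S : Finset α) (T : Finset β) : Prop :=
  (∀ x ∈ S, ∃! y, y ∈ T ∧ r x y) ∧ ∀ y ∈ T, ∃! x, x ∈ S ∧ r x y

theorem IsPairing.card_eq {α β : Type*} {r : α → β → Prop} {S : Finset α} {T : Finset β}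
    (h : IsPairing r S T) : #S = #T := by
  choose f hf _ using h.1
  choose g hg _ using h.2
  exact card_bij' f g (fun x hx ↦ (hf x hx).1) (fun y hy ↦ (hg y hy).1)
    (fun x hx ↦ (h.2 _ (hf x hx).1).unique (hg _ (hf x hx).1) ⟨hx, (hf x hx).2⟩)
    (fun y hy ↦ (h.1 _ (hg y hy).1).unique (hf _ (hg y hy).1) ⟨hy, (hg y hy).2⟩)

end Pairing

section Reachability

variable {α : Type*} {H : SimpleGraph α} {S T : Finset α} {x y : α}

open Classical in
/-- The vertices of the connected components of `H` that meet `D`. -/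
noncomputable def reachableFrom [Fintype α] (H : SimpleGraph α) (D : Finset α) : Finset α :=
  {v | ∃ x ∈ D, H.Reachable x v}

theorem mem_reachableFrom [Fintype α] {D : Finset α} :
    y ∈ reachableFrom H D ↔ ∃ x ∈ D, H.Reachable x y := by
  simp [reachableFrom]

theorem mem_reachableFrom_singleton [Fintype α] :
    y ∈ reachableFrom H {x} ↔ H.Reachable x y := by
  simp [mem_reachableFrom]

theorem connected_induce_reachableFrom_singleton [Fintype α] (H : SimpleGraph α) (x : α) :
    (H.induce (reachableFrom H {x} : Set α)).Connected := by
  have hsupp : (reachableFrom H {x} : Set α) = (H.connectedComponentMk x).supp := by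
    ext y
    rw [mem_coe, mem_reachableFrom_singleton, SimpleGraph.ConnectedComponent.mem_supp_iff,
      SimpleGraph.ConnectedComponent.eq, SimpleGraph.reachable_comm]
  rw [hsupp]
  exact SimpleGraph.ConnectedComponent.connected_toSimpleGraph _

theorem isPairing_reachable_of_card_inter [Fintype α] [DecidableEq α]
    (heq : ∀ x, #(S ∩ reachableFrom H {x}) = #(T ∩ reachableFrom H {x}))
    (hle : ∀ x, #(S ∩ reachableFrom H {x}) ≤ 1) : IsPairing H.Reachable S T := by
  have existsUnique : ∀ {S T : Finset α} {x},
      #(S ∩ reachableFrom H {x}) = #(T ∩ reachableFrom H {x}) →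
      #(S ∩ reachableFrom H {x}) ≤ 1 → x ∈ S → ∃! y, y ∈ T ∧ H.Reachable x y := by
    intro S T x heq hle hx
    have hpos : 0 < #(S ∩ reachableFrom H {x}) :=
      card_pos.2 ⟨x, mem_inter.2 ⟨hx, mem_reachableFrom_singleton.2 .rfl⟩⟩
    have hone : #(T ∩ reachableFrom H {x}) = 1 := by omega
    simpa only [card_eq_one_iff_existsUnique, mem_inter, mem_reachableFrom_singleton] using hone
  refine ⟨fun x ↦ existsUnique (heq x) (hle x), fun y hy ↦ ?_⟩
  simpa only [SimpleGraph.reachable_comm] using existsUnique (heq y).symm (heq y ▸ hle y) hy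

namespace IsPairing

theorem symm_reachable (h : IsPairing H.Reachable S T) : IsPairing H.Reachable T S := by
  simpa only [IsPairing, H.reachable_comm, and_comm] using h

theorem eq_of_reachable (h : IsPairing H.Reachable S T) (hx : x ∈ S) (hy : y ∈ S)
    (hxy : H.Reachable x y) : x = y := by
  obtain ⟨z, ⟨hz, hyz⟩, -⟩ := h.1 y hy
  exact (h.2 z hz).unique ⟨hx, hxy.trans hyz⟩ ⟨hy, hyz⟩

theorem existsUnique_reachable_ne [DecidableEq α] (h : IsPairing H.Reachable S T)
    (hST : Disjoint S T) (hx : x ∈ S ∪ T) :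
    ∃! y, y ∈ S ∪ T ∧ y ≠ x ∧ H.Reachable x y := by
  wlog hxS : x ∈ S generalizing S T
  · rw [union_comm] at hx ⊢
    exact this h.symm_reachable hST.symm hx ((mem_union.1 hx).resolve_right hxS)
  obtain ⟨y, ⟨hy, hxy⟩, unique⟩ := h.1 x hxS
  refine ⟨y, ⟨mem_union_right _ hy, (disjoint_left.1 hST hxS <| · ▸ hy), hxy⟩, ?_⟩
  rintro z ⟨hz, hzx, hxz⟩
  have hzS : z ∉ S := fun hzS ↦ hzx (h.eq_of_reachable hxS hzS hxz).symm
  exact unique z ⟨(mem_union.1 hz).resolve_left hzS, hxz⟩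

theorem of_union_eq [DecidableEq α] {A B : Finset α} (h : IsPairing H.Reachable S T)
    (hST : Disjoint S T) (hAB : Disjoint A B) (hunion : S ∪ T = A ∪ B)
    (hA : ∀ x ∈ A, ∀ y ∈ A, H.Reachable x y → x = y)
    (hB : ∀ x ∈ B, ∀ y ∈ B, H.Reachable x y → x = y) : IsPairing H.Reachable A B := by
  have existsUnique : ∀ {A B : Finset α}, Disjoint A B → S ∪ T = A ∪ B →
      (∀ x ∈ A, ∀ y ∈ A, H.Reachable x y → x = y) →
      ∀ x ∈ A, ∃! y, y ∈ B ∧ H.Reachable x y := by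
    intro A B hAB hunion hA x hx
    obtain ⟨y, ⟨hy, hyx, hxy⟩, unique⟩ :=
      h.existsUnique_reachable_ne hST (x := x) (by simp [hunion, hx])
    rw [hunion] at hy unique
    refine ⟨y, ⟨(mem_union.1 hy).resolve_left fun hyA ↦ hyx (hA x hx y hyA hxy).symm, hxy⟩, ?_⟩
    rintro z ⟨hz, hxz⟩
    exact unique z ⟨mem_union_right _ hz, (disjoint_left.1 hAB hx <| · ▸ hz), hxz⟩
  refine ⟨existsUnique hAB hunion hA, fun y hy ↦ ?_⟩
  simpa only [SimpleGraph.reachable_comm] using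
    existsUnique hAB.symm (by rw [hunion, union_comm]) hB y hy

variable [Fintype α] [DecidableEq α] {D : Finset α}

theorem inter_reachableFrom (h : IsPairing H.Reachable S T) (hD : D ⊆ S) :
    S ∩ reachableFrom H D = D := by
  ext v
  rw [mem_inter, mem_reachableFrom]
  constructor
  · rintro ⟨hv, x, hx, hxv⟩
    exact h.eq_of_reachable (hD hx) hv hxv ▸ hx
  · exact fun hv ↦ ⟨hD hv, v, hv, .rfl⟩

theorem card_inter_reachableFrom (h : IsPairing H.Reachable S T) (hD : D ⊆ S) :
    #(T ∩ reachableFrom H D) = #D := by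
  have hpair : IsPairing H.Reachable D (T ∩ reachableFrom H D) := by
    refine ⟨fun x hx ↦ ?_, fun y hy ↦ ?_⟩
    · obtain ⟨y, ⟨hy, hxy⟩, unique⟩ := h.1 x (hD hx)
      exact ⟨y, ⟨mem_inter.2 ⟨hy, mem_reachableFrom.2 ⟨x, hx, hxy⟩⟩, hxy⟩,
        fun z hz ↦ unique z ⟨(mem_inter.1 hz.1).1, hz.2⟩⟩
    · obtain ⟨-, hy⟩ := mem_inter.1 hy
      obtain ⟨x, hx, hxy⟩ := mem_reachableFrom.1 hy
      exact ⟨x, ⟨hx, hxy⟩, fun z hz ↦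
        h.eq_of_reachable (hD hz.1) (hD hx) (hz.2.trans hxy.symm)⟩
  exact hpair.card_eq.symm

theorem inter_reachableFrom_eq_of_split {A₁ A₂ B Y : Finset α} (hY : Y ⊆ B)
    (hAB : Disjoint (A₁ ∪ A₂) B) (hpair : IsPairing H.Reachable (A₁ ∪ A₂) B)
    (hsplit : IsPairing H.Reachable (A₁ ∪ Y) (A₂ ∪ B \ Y)) :
    B ∩ reachableFrom H A₂ = Y := by
  ext v
  rw [mem_inter, mem_reachableFrom]
  constructor
  · rintro ⟨hv, x, hx, hxv⟩
    by_contra hvY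
    have hxv : x = v := hsplit.symm_reachable.eq_of_reachable (mem_union_left _ hx)
      (mem_union_right _ (mem_sdiff.2 ⟨hv, hvY⟩)) hxv
    exact disjoint_left.1 hAB (mem_union_right _ hx) (hxv ▸ hv)
  · intro hv
    obtain ⟨x, ⟨hx, hvx⟩, -⟩ := hsplit.1 v (mem_union_right _ hv)
    refine ⟨hY hv, x, (mem_union.1 hx).resolve_right fun hxB ↦ ?_, hvx.symm⟩
    obtain ⟨hxB, hxY⟩ := mem_sdiff.1 hxB
    exact hxY (hpair.symm_reachable.eq_of_reachable (hY hv) hxB hvx ▸ hv)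

end IsPairing

end Reachability

section EdgesMeeting

variable {α : Type*} {C : Finset α} {m m₁ m₂ : Finset (Sym2 α)} {e : Sym2 α}

open Classical in
/-- The edges of `m` with at least one endpoint in `C`. -/
noncomputable def edgesMeeting (C : Finset α) (m : Finset (Sym2 α)) : Finset (Sym2 α) :=
  {e ∈ m | ∃ v ∈ e, v ∈ C}

theorem mem_edgesMeeting : e ∈ edgesMeeting C m ↔ e ∈ m ∧ ∃ v ∈ e, v ∈ C := by
  simp [edgesMeeting]

theorem edgesMeeting_subset : edgesMeeting C m ⊆ m := fun _ he ↦ (mem_edgesMeeting.1 he).1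

/-- No edge of `m` joins `C` to its complement. -/
def EdgeClosed (C : Finset α) (m : Finset (Sym2 α)) : Prop :=
  ∀ e ∈ m, ∀ x ∈ e, ∀ y ∈ e, x ∈ C → y ∈ C

theorem EdgeClosed.mem_edgesMeeting_iff (hC : EdgeClosed C m) (he : e ∈ m) {v : α}
    (hv : v ∈ e) : e ∈ edgesMeeting C m ↔ v ∈ C := by
  rw [mem_edgesMeeting]
  exact ⟨fun ⟨_, x, hx, hxC⟩ ↦ hC e he x hx v hv hxC, fun hvC ↦ ⟨he, v, hv, hvC⟩⟩

theorem card_le_card_edgesMeeting_add_one {E : Finset (Sym2 α)}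
    (h : ((SimpleGraph.fromEdgeSet (E : Set (Sym2 α))).induce (C : Set α)).Connected) :
    #C ≤ #(edgesMeeting C E) + 1 := by
  set H := (SimpleGraph.fromEdgeSet (E : Set (Sym2 α))).induce (C : Set α)
  have hmaps : ∀ e ∈ H.edgeSet, e.map Subtype.val ∈ edgesMeeting C E := by
    refine Sym2.ind fun u v huv ↦ mem_edgesMeeting.2 ⟨?_, u, by simp, u.2⟩
    exact ((SimpleGraph.fromEdgeSet_adj _).1 huv).1
  have hedges : Nat.card H.edgeSet ≤ #(edgesMeeting C E) := by
    rw [Nat.card_coe_set_eq, ← Set.ncard_coe_finset]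
    exact Set.ncard_le_ncard_of_injOn _ hmaps
      (Sym2.map.injective Subtype.val_injective).injOn (finite_toSet _)
  calc #C = Nat.card (C : Set α) := by simp
    _ ≤ Nat.card H.edgeSet + 1 := h.card_vert_le_card_edgeSet_add_one
    _ ≤ #(edgesMeeting C E) + 1 := by gcongr

variable [DecidableEq α]

theorem edgesMeeting_union :
    edgesMeeting C (m₁ ∪ m₂) = edgesMeeting C m₁ ∪ edgesMeeting C m₂ := by
  simp [edgesMeeting, filter_union]

/-- The edge set `m₁` with its part at `C` replaced by that of `m₂`. -/
noncomputable def swapOn (C : Finset α) (m₁ m₂ : Finset (Sym2 α)) : Finset (Sym2 α) :=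
  m₁ \ edgesMeeting C m₁ ∪ edgesMeeting C m₂

theorem swapOn_swapOn : swapOn C (swapOn C m₁ m₂) (swapOn C m₂ m₁) = m₁ := by
  ext e
  by_cases h : ∃ v ∈ e, v ∈ C <;> simp [swapOn, mem_edgesMeeting, h]

theorem swapOn_union_swapOn : swapOn C m₁ m₂ ∪ swapOn C m₂ m₁ = m₁ ∪ m₂ := by
  ext e
  by_cases h : ∃ v ∈ e, v ∈ C <;> simp [swapOn, mem_edgesMeeting, h, or_comm]

theorem prod_swapOn {R : Type*} [CommMonoid R] (w : Sym2 α → R) :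
    ∏ e ∈ swapOn C m₁ m₂, w e =
      (∏ e ∈ m₁ \ edgesMeeting C m₁, w e) * ∏ e ∈ edgesMeeting C m₂, w e := by
  refine prod_union (disjoint_left.2 fun e he₁ he₂ ↦ ?_)
  rw [mem_sdiff, mem_edgesMeeting] at he₁
  exact he₁.2 ⟨he₁.1, (mem_edgesMeeting.1 he₂).2⟩

theorem prod_swapOn_mul_prod_swapOn {R : Type*} [CommMonoid R] (w : Sym2 α → R) :
    (∏ e ∈ swapOn C m₁ m₂, w e) * ∏ e ∈ swapOn C m₂ m₁, w e =
      (∏ e ∈ m₁, w e) * ∏ e ∈ m₂, w e := by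
  rw [prod_swapOn, prod_swapOn, ← prod_sdiff (edgesMeeting_subset (C := C) (m := m₁)),
    ← prod_sdiff (edgesMeeting_subset (C := C) (m := m₂)), mul_mul_mul_comm,
    mul_comm (∏ e ∈ edgesMeeting C m₂, w e), mul_mul_mul_comm]

end EdgesMeeting

section PerfectMatching

variable {α : Type*} {G : SimpleGraph α} {s t C : Finset α} {m m₁ m₂ : Finset (Sym2 α)}

namespace IsPMOn

theorem of_subset (h : IsPMOn G s m) (hts : t ⊆ s) (hm : m₁ ⊆ m)
    (hmem : ∀ e ∈ m, ∀ v ∈ e, e ∈ m₁ ↔ v ∈ t) : IsPMOn G t m₁ := by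
  refine ⟨fun e he ↦ ⟨(h.1 e (hm he)).1, fun v hv ↦ (hmem e (hm he) v hv).1 he⟩, fun v hv ↦ ?_⟩
  obtain ⟨e, ⟨he, hve⟩, unique⟩ := h.2 v (hts hv)
  exact ⟨e, ⟨(hmem e he v hve).2 hv, hve⟩, fun f hf ↦ unique f ⟨hm hf.1, hf.2⟩⟩

variable [DecidableEq α]

theorem union (h₁ : IsPMOn G s m₁) (h₂ : IsPMOn G t m₂) (hst : Disjoint s t) :
    IsPMOn G (s ∪ t) (m₁ ∪ m₂) := by
  refine ⟨fun e he ↦ ?_, fun v hv ↦ ?_⟩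
  · rcases mem_union.1 he with he | he
    · exact ⟨(h₁.1 e he).1, fun v hv ↦ mem_union_left _ ((h₁.1 e he).2 v hv)⟩
    · exact ⟨(h₂.1 e he).1, fun v hv ↦ mem_union_right _ ((h₂.1 e he).2 v hv)⟩
  · wlog hvs : v ∈ s generalizing s t m₁ m₂
    · rw [union_comm] at hv ⊢
      exact this h₂ h₁ hst.symm hv ((mem_union.1 hv).resolve_right hvs)
    obtain ⟨e, ⟨he, hve⟩, unique⟩ := h₁.2 v hvs
    refine ⟨e, ⟨mem_union_left _ he, hve⟩, fun f ⟨hf, hvf⟩ ↦ unique f ⟨?_, hvf⟩⟩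
    exact (mem_union.1 hf).resolve_right fun hf₂ ↦
      disjoint_left.1 hst hvs ((h₂.1 f hf₂).2 v hvf)

theorem inter_edgesMeeting (h : IsPMOn G s m) (hC : EdgeClosed C m) :
    IsPMOn G (s ∩ C) (edgesMeeting C m) :=
  h.of_subset inter_subset_left edgesMeeting_subset fun e he v hv ↦ by
    simp [hC.mem_edgesMeeting_iff he hv, (h.1 e he).2 v hv]

theorem sdiff_edgesMeeting (h : IsPMOn G s m) (hC : EdgeClosed C m) :
    IsPMOn G (s \ C) (m \ edgesMeeting C m) :=
  h.of_subset sdiff_subset sdiff_subset fun e he v hv ↦ by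
    simp [hC.mem_edgesMeeting_iff he hv, (h.1 e he).2 v hv, he]

theorem swapOn (h₁ : IsPMOn G s m₁) (h₂ : IsPMOn G t m₂) (hC₁ : EdgeClosed C m₁)
    (hC₂ : EdgeClosed C m₂) : IsPMOn G (s \ C ∪ t ∩ C) (swapOn C m₁ m₂) :=
  (h₁.sdiff_edgesMeeting hC₁).union (h₂.inter_edgesMeeting hC₂)
    (disjoint_sdiff_self_left.mono_right inter_subset_right)

end IsPMOn

end PerfectMatching

section Bipartite

variable {α : Type*} [Fintype α] [DecidableEq α] {G : SimpleGraph α} {U V : Finset α}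

namespace IsBipartition

theorem symm (h : IsBipartition G U V) : IsBipartition G V U :=
  ⟨h.1.symm, union_comm U V ▸ h.2.1, fun _ _ hxy ↦ (h.2.2 hxy).symm⟩

theorem existsUnique_mem_left (h : IsBipartition G U V) {e : Sym2 α} (he : e ∈ G.edgeSet) :
    ∃! v, v ∈ U ∧ v ∈ e := by
  induction e using Sym2.ind with | _ x y
  have hUV := disjoint_left.1 h.1
  rcases h.2.2 he with ⟨hx, hy⟩ | ⟨hx, hy⟩
  · exact ⟨x, by simp [hx], by grind⟩
  · exact ⟨y, by simp [hy], by grind⟩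

theorem card_inter_left_add_card_inter_right (h : IsBipartition G U V) (K : Finset α) :
    #(K ∩ U) + #(K ∩ V) = #K := by
  rw [← card_union_of_disjoint (h.1.mono inter_subset_right inter_subset_right),
    ← inter_union_distrib_left, h.2.1, inter_univ]

end IsBipartition

namespace IsPMOn

variable {S K : Finset α} {m : Finset (Sym2 α)}

theorem card_inter_left (hb : IsBipartition G U V) {s : Finset α} (h : IsPMOn G s m) :
    #(s ∩ U) = #m := by
  refine IsPairing.card_eq (r := fun v e ↦ v ∈ e)
    ⟨fun v hv ↦ h.2 v (mem_inter.1 hv).1, fun e he ↦ ?_⟩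
  obtain ⟨v, ⟨hvU, hve⟩, unique⟩ := hb.existsUnique_mem_left (h.1 e he).1
  exact ⟨v, ⟨mem_inter.2 ⟨(h.1 e he).2 v hve, hvU⟩, hve⟩,
    fun x hx ↦ unique x ⟨(mem_inter.1 hx.1).2, hx.2⟩⟩

theorem card_edgesMeeting (hb : IsBipartition G U V) (h : IsPMOn G Sᶜ m) (hS : S ⊆ U)
    (hK : EdgeClosed K m) : #(edgesMeeting K m) = #(K ∩ V) := by
  have hV : V ⊆ Sᶜ := subset_compl_iff_disjoint_left.2 (hb.1.mono_left hS)
  rw [← (h.inter_edgesMeeting hK).card_inter_left hb.symm, inter_assoc,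
    inter_eq_right.2 (inter_subset_right.trans hV)]

theorem card_inter_add_card_inter (hb : IsBipartition G U V) (h : IsPMOn G Sᶜ m) (hS : S ⊆ U)
    (hK : EdgeClosed K m) : #(S ∩ K) + #(K ∩ V) = #(K ∩ U) := by
  rw [← h.card_edgesMeeting hb hS hK, ← (h.inter_edgesMeeting hK).card_inter_left hb,
    ← card_inter_add_card_sdiff (K ∩ U) S]
  congr 2 <;> grind [mem_compl]

end IsPMOn

end Bipartite

section Superposition

variable {α : Type*} [DecidableEq α] {G : SimpleGraph α} {m₁ m₂ : Finset (Sym2 α)}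

/-- The graph whose edges are those of `m₁` and `m₂`, double edges being merged. -/
def superposition (m₁ m₂ : Finset (Sym2 α)) : SimpleGraph α :=
  SimpleGraph.fromEdgeSet ((m₁ ∪ m₂ : Finset (Sym2 α)) : Set (Sym2 α))

theorem superposition_comm : superposition m₁ m₂ = superposition m₂ m₁ := by
  rw [superposition, superposition, union_comm]

theorem superposition_le {s t : Finset α} (h₁ : IsPMOn G s m₁) (h₂ : IsPMOn G t m₂) :
    superposition m₁ m₂ ≤ G := by
  intro x y hxy
  rcases mem_union.1 ((SimpleGraph.fromEdgeSet_adj _).1 hxy).1 with he | he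
  · exact (h₁.1 _ he).1
  · exact (h₂.1 _ he).1

theorem edgeClosed_reachableFrom_superposition_left [Fintype α] (D : Finset α) :
    EdgeClosed (reachableFrom (superposition m₁ m₂) D) m₁ := by
  intro e he x hx y hy hxC
  obtain ⟨z, hz, hzx⟩ := mem_reachableFrom.1 hxC
  rcases eq_or_ne x y with rfl | hxy
  · exact hxC
  · rw [(Sym2.mem_and_mem_iff hxy).1 ⟨hx, hy⟩] at he
    have hadj : (superposition m₁ m₂).Adj x y :=
      (SimpleGraph.fromEdgeSet_adj _).2 ⟨mem_union_left _ he, hxy⟩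
    exact mem_reachableFrom.2 ⟨z, hz, hzx.trans hadj.reachable⟩

theorem edgeClosed_reachableFrom_superposition_right [Fintype α] (D : Finset α) :
    EdgeClosed (reachableFrom (superposition m₁ m₂) D) m₂ :=
  superposition_comm (m₁ := m₁) ▸ edgeClosed_reachableFrom_superposition_left D

variable [Fintype α] {U V S T : Finset α}

theorem card_inter_eq_card_inter_of_edgeClosed {K : Finset α} (hb : IsBipartition G U V)
    (h₁ : IsPMOn G Sᶜ m₁) (h₂ : IsPMOn G Tᶜ m₂) (hS : S ⊆ U) (hT : T ⊆ U)
    (hK₁ : EdgeClosed K m₁) (hK₂ : EdgeClosed K m₂) : #(S ∩ K) = #(T ∩ K) := by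
  have hS_excess := h₁.card_inter_add_card_inter hb hS hK₁
  have hT_excess := h₂.card_inter_add_card_inter hb hT hK₂
  omega

theorem card_inter_component_le_one (hb : IsBipartition G U V) (h₁ : IsPMOn G Sᶜ m₁)
    (h₂ : IsPMOn G Tᶜ m₂) (hS : S ⊆ U) (hT : T ⊆ U) (x : α) :
    #(S ∩ reachableFrom (superposition m₁ m₂) {x}) ≤ 1 := by
  set K := reachableFrom (superposition m₁ m₂) {x}
  have hK₁ : EdgeClosed K m₁ := edgeClosed_reachableFrom_superposition_left {x}
  have hK₂ : EdgeClosed K m₂ := edgeClosed_reachableFrom_superposition_right {x}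
  have hK : #K ≤ 2 * #(K ∩ V) + 1 :=
    calc #K ≤ #(edgesMeeting K (m₁ ∪ m₂)) + 1 :=
          card_le_card_edgesMeeting_add_one (connected_induce_reachableFrom_singleton _ x)
      _ ≤ #(edgesMeeting K m₁) + #(edgesMeeting K m₂) + 1 := by
          rw [edgesMeeting_union]
          gcongr
          exact card_union_le _ _
      _ = 2 * #(K ∩ V) + 1 := by
          rw [h₁.card_edgesMeeting hb hS hK₁, h₂.card_edgesMeeting hb hT hK₂, two_mul]
  have hS_excess := h₁.card_inter_add_card_inter hb hS hK₁
  have hUV := hb.card_inter_left_add_card_inter_right K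
  omega

theorem isPairing_superposition (hb : IsBipartition G U V) (h₁ : IsPMOn G Sᶜ m₁)
    (h₂ : IsPMOn G Tᶜ m₂) (hS : S ⊆ U) (hT : T ⊆ U) :
    IsPairing (superposition m₁ m₂).Reachable S T :=
  isPairing_reachable_of_card_inter
    (fun x ↦ card_inter_eq_card_inter_of_edgeClosed hb h₁ h₂ hS hT
      (edgeClosed_reachableFrom_superposition_left {x})
      (edgeClosed_reachableFrom_superposition_right {x}))
    (card_inter_component_le_one hb h₁ h₂ hS hT)

end Superposition

section ComponentSwap

variable {α : Type*} [Fintype α] [DecidableEq α] {G : SimpleGraph α} {S T : Finset α}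
  {p : Finset (Sym2 α) × Finset (Sym2 α)}

/-- Exchange two edge sets on all connected components of their superposition that meet `D`. -/
noncomputable def componentSwap (D : Finset α) (p : Finset (Sym2 α) × Finset (Sym2 α)) :
    Finset (Sym2 α) × Finset (Sym2 α) :=
  let C := reachableFrom (superposition p.1 p.2) D
  (swapOn C p.1 p.2, swapOn C p.2 p.1)

theorem superposition_componentSwap (D : Finset α) :
    superposition (componentSwap D p).1 (componentSwap D p).2 = superposition p.1 p.2 := by
  simp only [superposition, componentSwap, swapOn_union_swapOn]

theorem componentSwap_componentSwap (D : Finset α) : componentSwap D (componentSwap D p) = p := by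
  rw [componentSwap, superposition_componentSwap]
  exact Prod.ext swapOn_swapOn swapOn_swapOn

open Classical in
/-- The pairs of a perfect matching of `G - S` and one of `G - T`. -/
noncomputable def pmPairs (G : SimpleGraph α) (S T : Finset α) :
    Finset (Finset (Sym2 α) × Finset (Sym2 α)) :=
  {p | IsPMOn G Sᶜ p.1 ∧ IsPMOn G Tᶜ p.2}

theorem mem_pmPairs : p ∈ pmPairs G S T ↔ IsPMOn G Sᶜ p.1 ∧ IsPMOn G Tᶜ p.2 := by
  simp [pmPairs]

theorem pmSum_compl_mul_pmSum_compl {R : Type*} [CommRing R] (w : Sym2 α → R) :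
    pmSum G w Sᶜ * pmSum G w Tᶜ =
      ∑ p ∈ pmPairs G S T, (∏ e ∈ p.1, w e) * ∏ e ∈ p.2, w e := by
  rw [pmSum, pmSum, sum_mul_sum, ← sum_product']
  refine sum_congr ?_ fun _ _ ↦ rfl
  ext p
  simp [mem_pmPairs]

theorem componentSwap_mem_pmPairs (hp : p ∈ pmPairs G S T) (D : Finset α) :
    let C := reachableFrom (superposition p.1 p.2) D
    componentSwap D p ∈ pmPairs G (S \ C ∪ T ∩ C) (T \ C ∪ S ∩ C) := by
  intro C
  obtain ⟨h₁, h₂⟩ := mem_pmPairs.1 hp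
  have hC₁ : EdgeClosed C p.1 := edgeClosed_reachableFrom_superposition_left D
  have hC₂ : EdgeClosed C p.2 := edgeClosed_reachableFrom_superposition_right D
  have hcompl (S T : Finset α) : (S \ C ∪ T ∩ C)ᶜ = Sᶜ \ C ∪ Tᶜ ∩ C := by grind [mem_compl]
  rw [mem_pmPairs, hcompl, hcompl]
  exact ⟨h₁.swapOn h₂ hC₁ hC₂, h₂.swapOn h₁ hC₂ hC₁⟩

variable {A₁ A₂ B Y : Finset α}

theorem componentSwap_mem_pmPairs_of_isPairing (hA : Disjoint A₁ A₂)
    (hpair : IsPairing (superposition p.1 p.2).Reachable (A₁ ∪ A₂) B)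
    (hY : B ∩ reachableFrom (superposition p.1 p.2) A₂ = Y)
    (hp : p ∈ pmPairs G (A₁ ∪ A₂) B) :
    componentSwap A₂ p ∈ pmPairs G (A₁ ∪ Y) (A₂ ∪ B \ Y) := by
  have hA₂ := hpair.inter_reachableFrom subset_union_right
  convert componentSwap_mem_pmPairs hp A₂ using 2 <;> grind [disjoint_left]

theorem componentSwap_mem_pmPairs_of_isPairing_split (hA : Disjoint A₁ A₂)
    (hpair : IsPairing (superposition p.1 p.2).Reachable (A₁ ∪ A₂) B)
    (hY : B ∩ reachableFrom (superposition p.1 p.2) A₂ = Y)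
    (hp : p ∈ pmPairs G (A₁ ∪ Y) (A₂ ∪ B \ Y)) :
    componentSwap A₂ p ∈ pmPairs G (A₁ ∪ A₂) B := by
  have hA₂ := hpair.inter_reachableFrom subset_union_right
  convert componentSwap_mem_pmPairs hp A₂ using 2 <;> grind [disjoint_left]

theorem pmSum_compl_mul_pmSum_compl_eq_sum {R : Type*} [CommRing R] (w : Sym2 α → R)
    {U V : Finset α} (hb : IsBipartition G U V) (hAU : A₁ ∪ A₂ ⊆ U) (hBU : B ⊆ U)
    (hA : Disjoint A₁ A₂) (hAB : Disjoint (A₁ ∪ A₂) B)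
    (hpair : ∀ Y ⊆ B, ∀ m₁ m₂, IsPMOn G (A₁ ∪ Y)ᶜ m₁ → IsPMOn G (A₂ ∪ B \ Y)ᶜ m₂ →
      IsPairing (superposition m₁ m₂).Reachable (A₁ ∪ A₂) B) :
    pmSum G w (A₁ ∪ A₂)ᶜ * pmSum G w Bᶜ =
      ∑ Y ∈ B.powersetCard #A₂, pmSum G w (A₁ ∪ Y)ᶜ * pmSum G w (A₂ ∪ B \ Y)ᶜ := by
  have pairing_split (Y) (hY : Y ⊆ B) (p) (hp : p ∈ pmPairs G (A₁ ∪ Y) (A₂ ∪ B \ Y)) :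
      IsPairing (superposition p.1 p.2).Reachable (A₁ ∪ A₂) B ∧
        B ∩ reachableFrom (superposition p.1 p.2) A₂ = Y := by
    obtain ⟨h₁, h₂⟩ := mem_pmPairs.1 hp
    have hp_pair := hpair Y hY _ _ h₁ h₂
    exact ⟨hp_pair, hp_pair.inter_reachableFrom_eq_of_split hY hAB
      (isPairing_superposition hb h₁ h₂ (by grind) (by grind))⟩
  simp only [pmSum_compl_mul_pmSum_compl]
  rw [sum_sigma']
  refine sum_nbij' (fun p ↦ ⟨B ∩ reachableFrom (superposition p.1 p.2) A₂, componentSwap A₂ p⟩)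
    (fun q ↦ componentSwap A₂ q.2) ?_ ?_ ?_ ?_ ?_
  · intro p hp
    obtain ⟨h₁, h₂⟩ := mem_pmPairs.1 hp
    have hp_pair := isPairing_superposition hb h₁ h₂ hAU hBU
    exact mem_sigma.2 ⟨mem_powersetCard.2 ⟨inter_subset_left,
      hp_pair.card_inter_reachableFrom subset_union_right⟩,
      componentSwap_mem_pmPairs_of_isPairing hA hp_pair rfl hp⟩
  · rintro ⟨Y, p⟩ hq
    obtain ⟨hY, hp⟩ := mem_sigma.1 hq
    obtain ⟨hp_pair, hp_inter⟩ := pairing_split Y (mem_powersetCard.1 hY).1 p hp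
    exact componentSwap_mem_pmPairs_of_isPairing_split hA hp_pair hp_inter hp
  · exact fun p _ ↦ componentSwap_componentSwap A₂
  · rintro ⟨Y, p⟩ hq
    obtain ⟨hY, hp⟩ := mem_sigma.1 hq
    obtain ⟨-, hp_inter⟩ := pairing_split Y (mem_powersetCard.1 hY).1 p hp
    simp only [superposition_componentSwap, componentSwap_componentSwap, hp_inter]
  · exact fun p _ ↦ (prod_swapOn_mul_prod_swapOn w).symm

end ComponentSwap

section Noncrossing

theorem even_card_of_involution {α : Type*} {s : Finset α} {σ : α → α}
    (hmaps : ∀ i ∈ s, σ i ∈ s) (hσ : ∀ i ∈ s, σ (σ i) = i) (hne : ∀ i ∈ s, σ i ≠ i) :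
    Even #s := by
  have hsum : ∑ _i ∈ s, (1 : ZMod 2) = 0 :=
    sum_involution (fun i _ ↦ σ i) (fun _ _ ↦ by decide) (fun i hi _ ↦ hne i hi) hmaps hσ
  rwa [sum_const, nsmul_one, ZMod.natCast_eq_zero_iff_even] at hsum

theorem odd_add_of_noncrossing_involution {N : ℕ} {σ : Fin N → Fin N}
    (hσ : Function.Involutive σ) (hne : ∀ i, σ i ≠ i)
    (hnc : ∀ i j, i < j → j < σ i → ¬ σ i < σ j) (i : Fin N) : Odd ((i : ℕ) + σ i) := by
  wlog hi : i < σ i generalizing i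
  · have h := this (σ i) (by rw [hσ i]; exact (hne i).lt_of_le (not_lt.1 hi))
    rwa [hσ i, add_comm] at h
  have hmaps : ∀ j ∈ Ioo i (σ i), σ j ∈ Ioo i (σ i) := by
    intro j hj
    obtain ⟨hij, hji⟩ := mem_Ioo.1 hj
    have hσj_ne_left : σ j ≠ i := fun h ↦ hji.ne (by rw [← h, hσ j])
    have hσj_ne_right : σ j ≠ σ i := fun h ↦ hij.ne' (hσ.injective h)
    refine mem_Ioo.2 ⟨lt_of_not_ge fun h ↦ ?_, (not_lt.1 (hnc i j hij hji)).lt_of_ne hσj_ne_right⟩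
    have hlt := h.lt_of_ne hσj_ne_left
    exact hnc (σ j) i hlt (by rwa [hσ j]) (by rwa [hσ j])
  have heven := even_card_of_involution hmaps (fun j _ ↦ hσ j) (fun j _ ↦ hne j)
  rw [Fin.card_Ioo] at heven
  rw [Fin.lt_def] at hi
  grind

variable {α : Type*} {G H : SimpleGraph α}

theorem exists_isPath_avoiding {S : Set α} {x y : α} (hHG : H ≤ G) (hxy : H.Reachable x y)
    (hS : ∀ u ∈ S, H.Reachable x u → u = x ∨ u = y) :
    ∃ p : G.Walk x y, p.IsPath ∧ (∀ u ∈ p.support, H.Reachable x u) ∧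
      ∀ u ∈ p.support, u ≠ x → u ≠ y → u ∉ S := by
  classical
  obtain ⟨p, hp⟩ := hxy.exists_isPath
  have hreach : ∀ u ∈ (p.mapLe hHG).support, H.Reachable x u := by
    intro u hu
    rw [SimpleGraph.Walk.support_mapLe_eq_support] at hu
    exact (p.takeUntil u hu).reachable
  exact ⟨p.mapLe hHG, (SimpleGraph.Walk.isPath_mapLe hHG).2 hp, hreach,
    fun u hu hux huy huS ↦ (hS u huS (hreach u hu)).elim hux huy⟩

theorem disjointPaths_of_not_reachable {S : Set α} {x₁ y₁ x₂ y₂ : α} (hHG : H ≤ G)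
    (h₁ : H.Reachable x₁ y₁) (h₂ : H.Reachable x₂ y₂) (hne : ¬ H.Reachable x₁ x₂)
    (hS₁ : ∀ u ∈ S, H.Reachable x₁ u → u = x₁ ∨ u = y₁)
    (hS₂ : ∀ u ∈ S, H.Reachable x₂ u → u = x₂ ∨ u = y₂) :
    DisjointPaths G S x₁ y₁ x₂ y₂ := by
  obtain ⟨p, hp, hp_reach, hp_avoid⟩ := exists_isPath_avoiding hHG h₁ hS₁
  obtain ⟨q, hq, hq_reach, hq_avoid⟩ := exists_isPath_avoiding hHG h₂ hS₂
  exact ⟨p, q, hp, hq, fun u hup huq ↦ hne ((hp_reach u hup).trans (hq_reach u huq).symm),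
    hp_avoid, hq_avoid⟩

theorem NoncrossingList.odd_add_of_reachable {L : List α} (hnc : NoncrossingList G L)
    (hL : L.Nodup) (hHG : H ≤ G)
    (hpartner : ∀ x ∈ L, ∃! y, y ∈ L ∧ y ≠ x ∧ H.Reachable x y) {i j : Fin L.length}
    (hij : i ≠ j) (hreach : H.Reachable (L.get i) (L.get j)) : Odd ((i : ℕ) + j) := by
  have hinj : Function.Injective L.get := List.nodup_iff_injective_get.1 hL
  have partner_index (i : Fin L.length) : ∃ j, j ≠ i ∧ H.Reachable (L.get i) (L.get j) ∧
      ∀ u ∈ L, H.Reachable (L.get i) u → u = L.get i ∨ u = L.get j := by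
    obtain ⟨y, ⟨hy, hyi, hreach⟩, unique⟩ := hpartner _ (L.get_mem i)
    obtain ⟨j, rfl⟩ := List.get_of_mem hy
    exact ⟨j, ne_of_apply_ne _ hyi, hreach,
      fun u hu hiu ↦ or_iff_not_imp_left.2 fun hui ↦ unique u ⟨hu, hui, hiu⟩⟩
  choose σ hσ_ne hσ_reach hσ_unique using partner_index
  have eq_partner {i j : Fin L.length} (hij : i ≠ j) (h : H.Reachable (L.get i) (L.get j)) :
      j = σ i :=
    hinj ((hσ_unique i _ (L.get_mem j) h).resolve_left (hinj.ne hij.symm))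
  have hσ : Function.Involutive σ := fun i ↦ (eq_partner (hσ_ne i) (hσ_reach i).symm).symm
  rw [eq_partner hij hreach]
  refine odd_add_of_noncrossing_involution hσ hσ_ne (fun i j hij hji hcross ↦ ?_) i
  exact hnc i j (σ i) (σ j) hij hji hcross <| disjointPaths_of_not_reachable hHG (hσ_reach i)
    (hσ_reach j) (fun h ↦ hji.ne (eq_partner hij.ne h)) (hσ_unique i) (hσ_unique j)

end Noncrossing

section Interleave

variable {α : Type*} {k : ℕ} {a b : Fin k → α}

/-- The sequence `a₁, b₁, a₂, b₂, …, a_k, b_k`; in 0-based positions the `a`s are at the even and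
the `b`s at the odd ones. -/
def interleave (a b : Fin k → α) : List α :=
  (List.finRange k).flatMap fun i ↦ [a i, b i]

theorem getElem?_flatMap_pair {β : Type*} (f g : β → α) (l : List β) (i : ℕ) :
    (l.flatMap fun x ↦ [f x, g x])[2 * i]? = l[i]?.map f ∧
      (l.flatMap fun x ↦ [f x, g x])[2 * i + 1]? = l[i]?.map g := by
  induction l generalizing i with
  | nil => simp
  | cons x l ih => cases i with
    | zero => simp
    | succ i => simpa [Nat.mul_add] using ih i

theorem exists_get_interleave_eq_left (a b : Fin k → α) (i : Fin k) :
    ∃ p : Fin (interleave a b).length, (p : ℕ) = 2 * i ∧ (interleave a b).get p = a i := by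
  obtain ⟨hlt, heq⟩ := (List.getElem?_eq_some_iff (a := a i)).1
    ((getElem?_flatMap_pair a b (List.finRange k) i).1.trans (by simp))
  exact ⟨⟨2 * i, hlt⟩, rfl, heq⟩

theorem exists_get_interleave_eq_right (a b : Fin k → α) (i : Fin k) :
    ∃ p : Fin (interleave a b).length, (p : ℕ) = 2 * i + 1 ∧ (interleave a b).get p = b i := by
  obtain ⟨hlt, heq⟩ := (List.getElem?_eq_some_iff (a := b i)).1
    ((getElem?_flatMap_pair a b (List.finRange k) i).2.trans (by simp))
  exact ⟨⟨2 * i + 1, hlt⟩, rfl, heq⟩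

theorem mem_interleave [DecidableEq α] {x : α} :
    x ∈ interleave a b ↔ x ∈ univ.image a ∪ univ.image b := by
  simp [interleave, exists_or, eq_comm]

theorem injective_left_of_nodup_interleave (h : (interleave a b).Nodup) :
    Function.Injective a := by
  intro i j hij
  obtain ⟨p, hp, hpi⟩ := exists_get_interleave_eq_left a b i
  obtain ⟨q, hq, hqj⟩ := exists_get_interleave_eq_left a b j
  have hpq : p = q := List.nodup_iff_injective_get.1 h (by rw [hpi, hqj, hij])
  omega

theorem disjoint_image_of_nodup_interleave [DecidableEq α] (h : (interleave a b).Nodup) :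
    Disjoint (univ.image a) (univ.image b) := by
  simp only [disjoint_left, mem_image, mem_univ, true_and]
  rintro _ ⟨i, rfl⟩ ⟨j, hji⟩
  obtain ⟨p, hp, hpi⟩ := exists_get_interleave_eq_left a b i
  obtain ⟨q, hq, hqj⟩ := exists_get_interleave_eq_right a b j
  have hpq : p = q := List.nodup_iff_injective_get.1 h (by rw [hpi, hqj, hji])
  omega

theorem isPairing_image_of_noncrossingList [DecidableEq α] {G H : SimpleGraph α}
    {S T : Finset α} (hHG : H ≤ G) (hpair : IsPairing H.Reachable S T) (hST : Disjoint S T)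
    (hunion : S ∪ T = univ.image a ∪ univ.image b) (hnodup : (interleave a b).Nodup)
    (hnc : NoncrossingList G (interleave a b)) :
    IsPairing H.Reachable (univ.image a) (univ.image b) := by
  have hodd {p q : Fin (interleave a b).length} (hpq : p ≠ q) :=
    hnc.odd_add_of_reachable hnodup hHG (fun x hx ↦ by
      simpa only [hunion, ← mem_interleave] using
        hpair.existsUnique_reachable_ne hST (hunion ▸ mem_interleave.1 hx)) hpq
  refine hpair.of_union_eq hST (disjoint_image_of_nodup_interleave hnodup) hunion ?_ ?_
  · simp only [mem_image, mem_univ, true_and]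
    rintro _ ⟨i, rfl⟩ _ ⟨j, rfl⟩ hreach
    obtain ⟨p, hp, hpi⟩ := exists_get_interleave_eq_left a b i
    obtain ⟨q, hq, hqj⟩ := exists_get_interleave_eq_left a b j
    rw [← hpi, ← hqj] at hreach ⊢
    by_contra hne
    grind [hodd (ne_of_apply_ne _ hne) hreach]
  · simp only [mem_image, mem_univ, true_and]
    rintro _ ⟨i, rfl⟩ _ ⟨j, rfl⟩ hreach
    obtain ⟨p, hp, hpi⟩ := exists_get_interleave_eq_right a b i
    obtain ⟨q, hq, hqj⟩ := exists_get_interleave_eq_right a b j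
    rw [← hpi, ← hqj] at hreach ⊢
    by_contra hne
    grind [hodd (ne_of_apply_ne _ hne) hreach]

end Interleave

/-- Condensation for unbalanced bipartite graphs (Corollary 2.9). -/
theorem unbalanced_bipartite_condensation {α R : Type*} [Fintype α] [DecidableEq α]
    [CommRing R] (G : SimpleGraph α) (w : Sym2 α → R) (n k : ℕ)
    (U V : Finset α) (hbip : IsBipartition G U V)
    (hU : U.card = n + k) (hV : V.card = n)
    (hk2 : 2 ≤ k) (hkn : k ≤ n)
    (a b : Fin k → α)
    (hdist : ((List.finRange k).flatMap (fun i => [a i, b i])).Nodup)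
    (hnc : NoncrossingList G ((List.finRange k).flatMap (fun i => [a i, b i])))
    (A B : Finset α) (hA : A = Finset.univ.image a) (hB : B = Finset.univ.image b)
    (hAU : A ⊆ U) (hBU : B ⊆ U)
    (A₁ A₂ : Finset α) (hpart : A₁ ∪ A₂ = A) (hdisj : Disjoint A₁ A₂) :
    pmSum G w (Finset.univ \ A) * pmSum G w (Finset.univ \ B) =
    ∑ Y ∈ B.powerset.filter (fun Y => Y.card = k - A₁.card),
        pmSum G w (Finset.univ \ (A₁ ∪ Y)) *
          pmSum G w (Finset.univ \ (A₂ ∪ (B \ Y))) := by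
  subst hA hB
  have hAB : Disjoint (univ.image a) (univ.image b) :=
    disjoint_image_of_nodup_interleave hdist
  have hcard : k - A₁.card = A₂.card := by
    have hsum : A₁.card + A₂.card = k := by
      rw [← card_union_of_disjoint hdisj, hpart,
        card_image_of_injective _ (injective_left_of_nodup_interleave hdist), card_fin]
    omega
  simp only [← compl_eq_univ_sdiff, hcard, ← powersetCard_eq_filter, ← hpart] at hAU hAB ⊢
  refine pmSum_compl_mul_pmSum_compl_eq_sum w hbip hAU hBU hdisj hAB fun Y hY m₁ m₂ h₁ h₂ ↦ ?_
  have hunion : A₁ ∪ Y ∪ (A₂ ∪ univ.image b \ Y) = univ.image a ∪ univ.image b := by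
    rw [union_union_union_comm, union_sdiff_of_subset hY, hpart]
  rw [hpart]
  exact isPairing_image_of_noncrossingList (superposition_le h₁ h₂)
    (isPairing_superposition hbip h₁ h₂ (by grind) (by grind))
    (by grind [disjoint_left]) hunion hdist hnc
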